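/- Let q > 0, q ≠ 1, λ ≠ 0, and define G_n(P) = h((1/λ)·log₂(Σ_{k=1}^n p_k^{(q)} p_k^{−λ})) for P ∈ Δ_n with strictly positive components, where h(x) = (2^{(1−q)x} − 1)/(1−q). Then for all n, m > 1 and all P ∈ Δ_n, Q ∈ Δ_m with strictly positive components, Σ_{i,j} (P⋆Q)^{(q)}_{ij} (p_i q_j)^{−λ} = (Σ_i p_i^{(q)} p_i^{−λ})·(Σ_j q_j^{(q)} q_j^{−λ}), and consequently G_{nm}(P ⋆ Q) = G_n(P) ⊕_q G_m(Q). -/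

import Mathlib

/-!
Powers are multiplicative on nonnegative reals and a double sum of products factors, so both the
normalizing constant and the numerators of the escort distribution factor over `P ⋆ Q`
(`escort_prod`); hence so do the escort-weighted power sums (`escort_sum_prod`). These sums are
positive, so `logb 2` turns their product into a sum. Finally `u ↦ 1 + (1 - q) u` sends `⊕_q` to
multiplication and `h x` to `2 ^ ((1 - q) x)`, so `h` sends `+` to `⊕_q` (`hfun_add`).
-/

open Real BigOperators

noncomputable section

/-- The `⊕_q`-addition: `u ⊕_q v = u + v + (1-q)·u·v`. -/
def opq (q u v : ℝ) : ℝ := u + v + (1 - q) * u * v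

/-- `h(x) = x` for `q = 1`, and `h(x) = (2^{(1-q)x} - 1)/(1-q)` for `q ≠ 1`. -/
def hfun (q x : ℝ) : ℝ := if q = 1 then x else ((2:ℝ) ^ ((1 - q) * x) - 1) / (1 - q)

/-- `h⁻¹(x) = x` for `q = 1`, and `h⁻¹(x) = (1/(1-q))·log₂((1-q)x + 1)` for `q ≠ 1`. -/
def hfunInv (q x : ℝ) : ℝ := if q = 1 then x else (1 / (1 - q)) * Real.logb 2 ((1 - q) * x + 1)

/-- A probability distribution: nonnegative components summing to 1. -/
def IsDistribution {α : Type*} [Fintype α] (p : α → ℝ) : Prop :=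
  (∀ k, 0 ≤ p k) ∧ ∑ k, p k = 1

/-- The `q`-escort distribution: `p_k^{(q)} = p_k^q / ∑_i p_i^q` (real powers, `0^q = 0`). -/
def escort (q : ℝ) {α : Type*} [Fintype α] (p : α → ℝ) (k : α) : ℝ :=
  p k ^ q / ∑ i, p i ^ q

/-- The two-parameter entropy (for `q ≠ 1`, `λ ≠ 0`):
`G(P) = h((1/λ)·log₂(Σ_k p_k^{(q)} p_k^{−λ}))`. -/
def Glam (q lam : ℝ) {α : Type*} [Fintype α] (p : α → ℝ) : ℝ :=
  hfun q ((1 / lam) * Real.logb 2 (∑ k, escort q p k * p k ^ (-lam)))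

theorem escort_prod (q : ℝ) {α β : Type*} [Fintype α] [Fintype β] (p : α → ℝ) (r : β → ℝ)
    (hp : ∀ i, 0 ≤ p i) (hr : ∀ j, 0 ≤ r j) (x : α × β) :
    escort q (fun y : α × β => p y.1 * r y.2) x = escort q p x.1 * escort q r x.2 := by
  have hden : ∑ y : α × β, (p y.1 * r y.2) ^ q = (∑ i, p i ^ q) * ∑ j, r j ^ q := by
    rw [Finset.sum_mul_sum, Fintype.sum_prod_type]
    exact Finset.sum_congr rfl fun i _ => Finset.sum_congr rfl fun j _ =>
      Real.mul_rpow (hp i) (hr j)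
  simp only [escort]
  rw [hden, Real.mul_rpow (hp _) (hr _), mul_div_mul_comm]

theorem escort_sum_prod (q s : ℝ) {α β : Type*} [Fintype α] [Fintype β] (p : α → ℝ) (r : β → ℝ)
    (hp : ∀ i, 0 ≤ p i) (hr : ∀ j, 0 ≤ r j) :
    ∑ x : α × β, escort q (fun y : α × β => p y.1 * r y.2) x * (p x.1 * r x.2) ^ s =
      (∑ i, escort q p i * p i ^ s) * ∑ j, escort q r j * r j ^ s := by
  rw [Finset.sum_mul_sum, Fintype.sum_prod_type]
  refine Finset.sum_congr rfl fun i _ => Finset.sum_congr rfl fun j _ => ?_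
  rw [escort_prod q p r hp hr, Real.mul_rpow (hp i) (hr j), mul_mul_mul_comm]

theorem escort_sum_pos (q s : ℝ) {α : Type*} [Fintype α] [Nonempty α] (p : α → ℝ)
    (hp : ∀ i, 0 < p i) : 0 < ∑ i, escort q p i * p i ^ s := by
  have hpow : ∀ (t : ℝ) (i : α), 0 < p i ^ t := fun t i => Real.rpow_pos_of_pos (hp i) t
  have hden : 0 < ∑ i, p i ^ q := Finset.sum_pos (fun i _ => hpow q i) Finset.univ_nonempty
  exact Finset.sum_pos (fun i _ => mul_pos (div_pos (hpow q i) hden) (hpow s i))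
    Finset.univ_nonempty

theorem hfun_add (q : ℝ) (hq : q ≠ 1) (x y : ℝ) :
    hfun q (x + y) = opq q (hfun q x) (hfun q y) := by
  have h : 1 - q ≠ 0 := sub_ne_zero.mpr hq.symm
  simp only [hfun, opq, if_neg hq]
  rw [mul_add, Real.rpow_add two_pos]
  field_simp
  ring

/-- for `q > 0`, `q ≠ 1`, `λ ≠ 0` and strictly positive `P ∈ Δ_n`,
`Q ∈ Δ_m`, the escort-weighted power sums multiply on direct products:
`Σ_{ij} (P⋆Q)^{(q)}_{ij} (p_i q_j)^{−λ} = (Σ_i p_i^{(q)} p_i^{−λ})·(Σ_j q_j^{(q)} q_j^{−λ})`,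
and consequently `G_{nm}(P ⋆ Q) = G_n(P) ⊕_q G_m(Q)`. -/
theorem stmt13 (q lam : ℝ) (hq0 : 0 < q) (hq1 : q ≠ 1) (hlam : lam ≠ 0)
    (n m : ℕ) (hn : 1 < n) (hm : 1 < m)
    (p : Fin n → ℝ) (qd : Fin m → ℝ)
    (hp : IsDistribution p) (hqd : IsDistribution qd)
    (hppos : ∀ i, 0 < p i) (hqpos : ∀ j, 0 < qd j) :
    (∑ x : Fin n × Fin m,
        escort q (fun y : Fin n × Fin m => p y.1 * qd y.2) x * (p x.1 * qd x.2) ^ (-lam) =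
      (∑ i, escort q p i * p i ^ (-lam)) * (∑ j, escort q qd j * qd j ^ (-lam))) ∧
    Glam q lam (fun x : Fin n × Fin m => p x.1 * qd x.2) =
      opq q (Glam q lam p) (Glam q lam qd) := by
  have hsum := escort_sum_prod q (-lam) p qd (fun i => (hppos i).le) (fun j => (hqpos j).le)
  refine ⟨hsum, ?_⟩
  have : Nonempty (Fin n) := ⟨⟨0, by omega⟩⟩
  have : Nonempty (Fin m) := ⟨⟨0, by omega⟩⟩
  simp only [Glam]
  rw [hsum, Real.logb_mul (escort_sum_pos q _ p hppos).ne' (escort_sum_pos q _ qd hqpos).ne',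
    mul_add, hfun_add q hq1]
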